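/- arXiv:1903.11939 — 2 statements merged into one kernel-verified Lean document; each statement's English description precedes it below -/
import Mathlib

section
/- Let 1/2 ≤ α < 1, let c > 0 and let 0 < β < 1/2. Define u(x,t) = (1/π) ∫_0^∞ E_α((1−ξ²) t^α) cos(xξ) dξ for x ∈ ℝ and t > 0. Then for every ε > 0 there exists T > 0 such that for all t ≥ T one has u(c·t^β, t) ≥ (1−ε)·c·α·t^{β−2α}·E_α(t^α); in other words, u(c·t^β, t) ≥ c·α·t^{β−2α}·E_α(t^α)·[1−o(1)] as t → +∞. -/
open Real MeasureTheory

/-- The Mittag-Leffler function `E_α(r) = ∑ r^k / Γ(1+kα)`. -/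
noncomputable def mittagLeffler (α r : ℝ) : ℝ :=
  ∑' k : ℕ, r ^ k / Real.Gamma (1 + k * α)

/-- The fundamental solution of the one-dimensional time-fractional reaction-diffusion
problem `∂_t^α u − u_xx = u` with a Dirac delta initial datum (case `a = d = 1`). -/
noncomputable def fundSol (α x t : ℝ) : ℝ :=
  (1 / π) * ∫ ξ in Set.Ioi (0 : ℝ), mittagLeffler α ((1 - ξ ^ 2) * t ^ α) * Real.cos (x * ξ)

open Set Filter Topology

section Series

variable {α : ℝ}

private lemma one_add_mul_pos (hα : 1 / 2 ≤ α) (k : ℕ) : 0 < 1 + (k : ℝ) * α := by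
  have : 0 ≤ (k : ℝ) * α := by positivity
  linarith

lemma Gamma_one_add_mul_pos (hα : 1 / 2 ≤ α) (k : ℕ) : 0 < Real.Gamma (1 + k * α) :=
  Real.Gamma_pos_of_pos (one_add_mul_pos hα k)

lemma Gamma_one_add_mul_step (hα : 1 / 2 ≤ α) (k : ℕ) :
    ((k : ℝ) + 2) / 2 * Real.Gamma (1 + k * α) ≤ Real.Gamma (1 + (k + 2 : ℕ) * α) := by
  have hk : (0 : ℝ) ≤ k := k.cast_nonneg
  have h0 : 0 ≤ (k : ℝ) * α := by positivity
  have h1 : Real.Gamma (1 + k * α + 1) = (1 + k * α) * Real.Gamma (1 + k * α) :=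
    Real.Gamma_add_one (by linarith)
  have h2 : Real.Gamma (1 + k * α + 1) ≤ Real.Gamma (1 + (k + 2 : ℕ) * α) := by
    apply Real.Gamma_strictMonoOn_Ici.monotoneOn
    · simp only [mem_Ici]; linarith
    · simp only [mem_Ici]; push_cast; nlinarith
    · push_cast; nlinarith
  have h3 : ((k : ℝ) + 2) / 2 ≤ 1 + k * α := by nlinarith
  have := mul_le_mul_of_nonneg_right h3 (Gamma_one_add_mul_pos hα k).le
  linarith

/-- Two-step ratio bound for the terms of the Mittag-Leffler series. -/
lemma mittagLeffler_term_step (hα : 1 / 2 ≤ α) {r : ℝ} (hr : 0 ≤ r) (k : ℕ) :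
    ((k : ℝ) + 2) * (r ^ (k + 2) / Real.Gamma (1 + (k + 2 : ℕ) * α)) ≤
      2 * r ^ 2 * (r ^ k / Real.Gamma (1 + k * α)) := by
  have hG := Gamma_one_add_mul_pos hα k
  have hG2 := Gamma_one_add_mul_pos hα (k + 2)
  have h := Gamma_one_add_mul_step hα k
  rw [← mul_div_assoc, ← mul_div_assoc, div_le_div_iff₀ hG2 hG]
  have : 0 ≤ r ^ (k + 2) := by positivity
  have := mul_le_mul_of_nonneg_left h this
  calc _ = 2 * (r ^ (k + 2) * (((k : ℝ) + 2) / 2 * Real.Gamma (1 + k * α))) := by ring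
    _ ≤ 2 * (r ^ (k + 2) * Real.Gamma (1 + (k + 2 : ℕ) * α)) := by linarith
    _ = _ := by ring

lemma summable_mittagLeffler_of_nonneg (hα : 1 / 2 ≤ α) {r : ℝ} (hr : 0 ≤ r) :
    Summable fun k : ℕ => r ^ k / Real.Gamma (1 + k * α) := by
  have key : ∀ i : ℕ, Summable fun k : ℕ =>
      r ^ (2 * k + i) / Real.Gamma (1 + (2 * k + i : ℕ) * α) := by
    intro i
    obtain ⟨N, hN⟩ := exists_nat_ge (4 * r ^ 2)
    refine summable_of_ratio_norm_eventually_le (r := 1 / 2) (by norm_num) ?_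
    filter_upwards [eventually_ge_atTop N] with n hn
    have hpos : ∀ k : ℕ, 0 ≤ r ^ k / Real.Gamma (1 + k * α) := fun k =>
      div_nonneg (by positivity) (Gamma_one_add_mul_pos hα k).le
    rw [Real.norm_of_nonneg (hpos _), Real.norm_of_nonneg (hpos _)]
    have h := mittagLeffler_term_step hα hr (2 * n + i)
    have e : 2 * (n + 1) + i = 2 * n + i + 2 := by ring
    rw [e]
    set A := r ^ (2 * n + i + 2) / Real.Gamma (1 + (2 * n + i + 2 : ℕ) * α)
    set B := r ^ (2 * n + i) / Real.Gamma (1 + (2 * n + i : ℕ) * α)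
    have hA : 0 ≤ A := hpos _
    have hB : 0 ≤ B := hpos _
    have hn' : (N : ℝ) ≤ n := by exact_mod_cast hn
    have hD : 4 * r ^ 2 ≤ ((2 * n + i : ℕ) : ℝ) + 2 := by push_cast; nlinarith
    have hD0 : (0 : ℝ) < ((2 * n + i : ℕ) : ℝ) + 2 := by positivity
    have : (((2 * n + i : ℕ) : ℝ) + 2) * A ≤ (((2 * n + i : ℕ) : ℝ) + 2) * (1 / 2 * B) := by
      nlinarith
    exact le_of_mul_le_mul_left this hD0
  exact Summable.even_add_odd (by simpa using key 0) (key 1)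

lemma summable_mittagLeffler (hα : 1 / 2 ≤ α) (r : ℝ) :
    Summable fun k : ℕ => r ^ k / Real.Gamma (1 + k * α) := by
  refine (summable_mittagLeffler_of_nonneg hα (abs_nonneg r)).of_norm_bounded fun k => ?_
  rw [norm_div, norm_pow, Real.norm_eq_abs, Real.norm_of_nonneg (Gamma_one_add_mul_pos hα k).le]

lemma continuous_mittagLeffler (hα : 1 / 2 ≤ α) : Continuous (mittagLeffler α) := by
  rw [continuous_iff_continuousAt]
  intro x
  have hcont : ContinuousOn (mittagLeffler α) (Metric.ball 0 (|x| + 1)) := by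
    refine continuousOn_tsum (fun k => by fun_prop)
      (summable_mittagLeffler_of_nonneg hα (r := |x| + 1) (by positivity)) fun k y hy => ?_
    have hG := Gamma_one_add_mul_pos hα k
    rw [norm_div, norm_pow, Real.norm_of_nonneg hG.le]
    gcongr
    simpa using (mem_ball_zero_iff.1 hy).le
  refine hcont.continuousAt (Metric.isOpen_ball.mem_nhds ?_)
  simp

lemma term_le_mittagLeffler (hα : 1 / 2 ≤ α) {r : ℝ} (hr : 0 ≤ r) (k : ℕ) :
    r ^ k / Real.Gamma (1 + k * α) ≤ mittagLeffler α r :=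
  (summable_mittagLeffler hα r).le_tsum k fun j _ =>
    div_nonneg (by positivity) (Gamma_one_add_mul_pos hα j).le

lemma mittagLeffler_nonneg (hα : 1 / 2 ≤ α) {r : ℝ} (hr : 0 ≤ r) : 0 ≤ mittagLeffler α r :=
  tsum_nonneg fun j => div_nonneg (by positivity) (Gamma_one_add_mul_pos hα j).le

lemma mittagLeffler_mono (hα : 1 / 2 ≤ α) {r s : ℝ} (hr : 0 ≤ r) (hrs : r ≤ s) :
    mittagLeffler α r ≤ mittagLeffler α s := by
  refine (summable_mittagLeffler hα r).tsum_le_tsum (fun k => ?_) (summable_mittagLeffler hα s)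
  have hG := Gamma_one_add_mul_pos hα k
  gcongr

/-- The first-moment bound `∑ k r^k / Γ(1+kα) ≤ 3 r² E_α(r)`, through Bernoulli's inequality, gives
a lower bound for `E_α` slightly to the left of `r`. -/
lemma mul_mittagLeffler_le (hα : 1 / 2 ≤ α) {r δ : ℝ} (hr : 1 ≤ r) (hδ0 : 0 ≤ δ) (hδ1 : δ ≤ 1) :
    (1 - 3 * r ^ 2 * δ) * mittagLeffler α r ≤ mittagLeffler α ((1 - δ) * r) := by
  have hr0 : 0 ≤ r := by linarith
  set a : ℕ → ℝ := fun k => r ^ k / Real.Gamma (1 + k * α) with ha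
  have ha0 : ∀ k, 0 ≤ a k := fun k =>
    div_nonneg (by positivity) (Gamma_one_add_mul_pos hα k).le
  have hs : Summable a := summable_mittagLeffler hα r
  have hmom : Summable fun k : ℕ => (k : ℝ) * a k := by
    rw [← summable_nat_add_iff 2]
    refine Summable.of_nonneg_of_le (fun k => mul_nonneg (by positivity) (ha0 _)) (fun k => ?_)
      (hs.mul_left (2 * r ^ 2))
    simpa [ha] using mittagLeffler_term_step hα hr0 k
  have hbound : ∑' k : ℕ, (k : ℝ) * a k ≤ 3 * r ^ 2 * ∑' k, a k := by
    have hsplit := hmom.sum_add_tsum_nat_add 2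
    have htail : ∑' k : ℕ, ((k + 2 : ℕ) : ℝ) * a (k + 2) ≤ 2 * r ^ 2 * ∑' k, a k := by
      rw [← tsum_mul_left]
      refine ((summable_nat_add_iff 2).2 hmom).tsum_le_tsum (fun k => ?_) (hs.mul_left _)
      simpa [ha] using mittagLeffler_term_step hα hr0 k
    have h1 : a 1 ≤ ∑' k, a k := hs.le_tsum 1 fun j _ => ha0 j
    have hG0 : 0 ≤ ∑' k, a k := tsum_nonneg ha0
    rw [← hsplit]
    simp only [Finset.sum_range_succ, Finset.sum_range_zero]
    have h2 : ∑' k, a k ≤ r ^ 2 * ∑' k, a k := le_mul_of_one_le_left hG0 (one_le_pow₀ hr)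
    rw [Nat.cast_zero, Nat.cast_one]
    linarith
  have hterm : ∀ k : ℕ, a k - δ * (k * a k) ≤ ((1 - δ) * r) ^ k / Real.Gamma (1 + k * α) := by
    intro k
    have hB : 1 + k * (-δ) ≤ (1 + -δ) ^ k := one_add_mul_le_pow (by linarith) k
    have := mul_le_mul_of_nonneg_right hB (ha0 k)
    rw [mul_pow, mul_div_assoc]
    change _ ≤ (1 - δ) ^ k * a k
    rw [sub_eq_add_neg 1 δ]
    linarith
  have h := (hs.sub (hmom.mul_left δ)).tsum_le_tsum hterm (summable_mittagLeffler hα _)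
  rw [hs.tsum_sub (hmom.mul_left δ), tsum_mul_left] at h
  have : δ * ∑' k : ℕ, (k : ℝ) * a k ≤ δ * (3 * r ^ 2 * ∑' k, a k) :=
    mul_le_mul_of_nonneg_left hbound hδ0
  change (1 - 3 * r ^ 2 * δ) * (∑' k, a k) ≤ ∑' k : ℕ, ((1 - δ) * r) ^ k / Real.Gamma (1 + k * α)
  linarith

lemma Gamma_add_le_rpow_mul_Gamma {x z : ℝ} (hx : 0 < x) (hz : 0 < z) :
    Real.Gamma (x + z) ≤ (x + z) ^ z * Real.Gamma x := by
  have hxz : 0 < x + z := by linarith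
  have h := Real.convexOn_log_Gamma.slope_mono_adjacent (x := x) (y := x + z) (z := x + z + 1)
    hx (by simp only [mem_Ioi]; linarith) (by linarith) (by linarith)
  simp only [Function.comp, add_sub_cancel_left, div_one] at h
  rw [Real.Gamma_add_one hxz.ne',
    Real.log_mul hxz.ne' (Real.Gamma_pos_of_pos hxz).ne', add_sub_cancel_right,
    div_le_iff₀ hz] at h
  rw [← Real.log_le_log_iff (Real.Gamma_pos_of_pos hxz)
    (mul_pos (Real.rpow_pos_of_pos hxz _) (Real.Gamma_pos_of_pos hx)),
    Real.log_mul (Real.rpow_pos_of_pos hxz _).ne' (Real.Gamma_pos_of_pos hx).ne',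
    Real.log_rpow hxz]
  linarith

/-- The terms of index below `N` carry only an exponentially small part of the series for
`E_α(t^α)`, as long as `N` is a small fraction of `t`. -/
lemma mittagLeffler_one_sub_mul_le (hα : 1 / 2 ≤ α) (hα1 : α < 1) {t δ : ℝ} {N : ℕ} (hN : 0 < N)
    (hNt : 3 * (1 + 2 * (N : ℝ)) ≤ t) (hδ0 : 0 ≤ δ) (hδ1 : δ ≤ 1) :
    mittagLeffler α ((1 - δ) * t ^ α) ≤
      (Real.exp (-(N * δ)) + Real.exp (-(N * α))) * mittagLeffler α (t ^ α) := by
  have hN' : (0 : ℝ) < N := by exact_mod_cast hN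
  have ht : 0 < t := by linarith
  have hα0 : 0 < α := by linarith
  set r := t ^ α with hr
  have hr0 : 0 ≤ r := Real.rpow_nonneg ht.le _
  set a : ℕ → ℝ := fun k => r ^ k / Real.Gamma (1 + k * α) with ha
  have ha0 : ∀ k, 0 ≤ a k := fun k =>
    div_nonneg (by positivity) (Gamma_one_add_mul_pos hα k).le
  have hs : Summable a := summable_mittagLeffler hα r
  have hshift : ∀ k < N, a k ≤ Real.exp (-(N * α)) * a (k + N) := by
    intro k hk
    have hk' : (k : ℝ) ≤ N := by exact_mod_cast hk.le
    have hz : 0 < (N : ℝ) * α := by positivity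
    have hG := Gamma_add_le_rpow_mul_Gamma (one_add_mul_pos hα k) hz
    have e : 1 + (k : ℝ) * α + N * α = 1 + ((k + N : ℕ) : ℝ) * α := by push_cast; ring
    rw [e] at hG
    have hpos := one_add_mul_pos hα (k + N)
    have hGk := Gamma_one_add_mul_pos hα k
    have hGkN := Gamma_one_add_mul_pos hα (k + N)
    have hle : Real.exp 1 * (1 + ((k + N : ℕ) : ℝ) * α) ≤ t := by
      have h3 : Real.exp 1 ≤ 3 := by linarith [Real.exp_one_lt_d9]
      have h4 : 1 + ((k + N : ℕ) : ℝ) * α ≤ 1 + 2 * N := by push_cast; nlinarith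
      calc _ ≤ 3 * (1 + 2 * (N : ℝ)) := by gcongr
        _ ≤ t := hNt
    have hpow : Real.exp (N * α) * (1 + ((k + N : ℕ) : ℝ) * α) ^ ((N : ℝ) * α) ≤ r ^ N := by
      have h5 := Real.rpow_le_rpow (by positivity) hle hz.le
      rw [Real.mul_rpow (Real.exp_pos 1).le hpos.le, Real.exp_one_rpow] at h5
      refine h5.trans_eq ?_
      rw [hr, ← Real.rpow_natCast, ← Real.rpow_mul ht.le, mul_comm]
    rw [Real.exp_neg, ha]
    simp only
    rw [← div_eq_inv_mul, div_div, div_le_div_iff₀ hGk (by positivity), pow_add]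
    calc r ^ k * (Real.Gamma (1 + ((k + N : ℕ) : ℝ) * α) * Real.exp (N * α))
        ≤ r ^ k * (((1 + ((k + N : ℕ) : ℝ) * α) ^ ((N : ℝ) * α) * Real.Gamma (1 + k * α))
            * Real.exp (N * α)) := by gcongr
      _ = r ^ k * (Real.exp (N * α) * (1 + ((k + N : ℕ) : ℝ) * α) ^ ((N : ℝ) * α))
            * Real.Gamma (1 + k * α) := by ring
      _ ≤ r ^ k * r ^ N * Real.Gamma (1 + k * α) := by gcongr
  have hterm : ∀ k : ℕ, ((1 - δ) * r) ^ k / Real.Gamma (1 + k * α) ≤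
      Real.exp (-(N * δ)) * a k + Real.exp (-(N * α)) * a (k + N) := by
    intro k
    rw [mul_pow, mul_div_assoc]
    change (1 - δ) ^ k * a k ≤ _
    rcases lt_or_ge k N with hk | hk
    · have h1 : (1 - δ) ^ k ≤ 1 := pow_le_one₀ (by linarith) (by linarith)
      have h2 := mul_le_mul_of_nonneg_right h1 (ha0 k)
      have h3 : 0 ≤ Real.exp (-(N * δ)) * a k := mul_nonneg (Real.exp_pos _).le (ha0 k)
      linarith [hshift k hk]
    · have h1 : (1 - δ) ^ k ≤ (1 - δ) ^ N :=
        pow_le_pow_of_le_one (by linarith) (by linarith) hk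
      have h2 : (1 - δ) ^ N ≤ Real.exp (-(N * δ)) := by
        calc (1 - δ) ^ N ≤ (Real.exp (-δ)) ^ N :=
              pow_le_pow_left₀ (by linarith) (Real.one_sub_le_exp_neg δ) N
          _ = _ := by rw [← Real.exp_nat_mul]; congr 1; ring
      have h3 := mul_le_mul_of_nonneg_right (h1.trans h2) (ha0 k)
      have h4 : 0 ≤ Real.exp (-(N * α)) * a (k + N) := mul_nonneg (Real.exp_pos _).le (ha0 _)
      linarith
  have hsN : Summable fun k => a (k + N) := (summable_nat_add_iff N).2 hs
  have h := (summable_mittagLeffler hα ((1 - δ) * r)).tsum_le_tsum hterm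
    ((hs.mul_left _).add (hsN.mul_left _))
  rw [(hs.mul_left _).tsum_add (hsN.mul_left _), tsum_mul_left, tsum_mul_left] at h
  have htail : ∑' k, a (k + N) ≤ ∑' k, a k := by
    rw [← hs.sum_add_tsum_nat_add N]
    linarith [Finset.sum_nonneg fun k (_ : k ∈ Finset.range N) => ha0 k]
  have := mul_le_mul_of_nonneg_left htail (Real.exp_pos (-(N * α))).le
  change _ ≤ (Real.exp (-(N * δ)) + Real.exp (-(N * α))) * ∑' k, a k
  unfold mittagLeffler
  linarith

end Series

section FractionalDerivative

lemma intervalIntegrable_beta {a b : ℝ} (ha : 0 < a) (hb : 0 < b) :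
    IntervalIntegrable (fun x : ℝ => x ^ (a - 1) * (1 - x) ^ (b - 1)) volume 0 1 := by
  have h := (Complex.betaIntegral_convergent (u := a) (v := b) (by simpa) (by simpa)).norm
  refine h.congr fun x hx => ?_
  rw [uIoc_of_le zero_le_one] at hx
  have h1 : (0 : ℝ) ≤ 1 - x := by linarith [hx.2]
  have e : (x : ℂ) ^ ((a : ℂ) - 1) * (1 - (x : ℂ)) ^ ((b : ℂ) - 1) =
      ((x ^ (a - 1) * (1 - x) ^ (b - 1) : ℝ) : ℂ) := by
    push_cast [Complex.ofReal_cpow hx.1.le, Complex.ofReal_cpow h1]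
    rfl
  simp only [e, Complex.norm_real]
  exact Real.norm_of_nonneg (mul_nonneg (Real.rpow_nonneg hx.1.le _) (Real.rpow_nonneg h1 _))

lemma integral_beta {a b : ℝ} (ha : 0 < a) (hb : 0 < b) :
    ∫ x in (0 : ℝ)..1, x ^ (a - 1) * (1 - x) ^ (b - 1) =
      Real.Gamma a * Real.Gamma b / Real.Gamma (a + b) := by
  have h : ((∫ x in (0 : ℝ)..1, x ^ (a - 1) * (1 - x) ^ (b - 1) : ℝ) : ℂ) =
      Complex.betaIntegral a b := by
    rw [Complex.betaIntegral, ← intervalIntegral.integral_ofReal]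
    refine intervalIntegral.integral_congr fun x hx => ?_
    rw [uIcc_of_le zero_le_one] at hx
    have h1 : (0 : ℝ) ≤ 1 - x := by linarith [hx.2]
    push_cast [Complex.ofReal_cpow hx.1, Complex.ofReal_cpow h1]
    rfl
  change _ = ProbabilityTheory.beta a b
  rw [ProbabilityTheory.beta_eq_betaIntegralReal a b ha hb, ← h, Complex.ofReal_re]

lemma one_sub_rpow_le {a σ : ℝ} (hσ0 : 0 < σ) (hσ1 : σ ≤ 1) :
    1 - σ ^ a ≤ max a 1 * (1 - σ) := by
  have h := one_add_mul_self_le_rpow_one_add (s := σ - 1) (by linarith) (le_max_right a 1)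
  rw [add_sub_cancel] at h
  have := Real.rpow_le_rpow_of_exponent_ge hσ0 hσ1 (le_max_left a 1)
  linarith

lemma intervalIntegrable_one_sub_rpow {p : ℝ} (hp : -1 < p) :
    IntervalIntegrable (fun σ : ℝ => (1 - σ) ^ p) volume 0 1 := by
  simpa using ((intervalIntegral.intervalIntegrable_rpow' hp (a := 0) (b := 1)).comp_sub_left 1).symm

variable {α : ℝ}

private lemma one_sub_mul_rpow {σ : ℝ} (hσ : σ < 1) :
    (1 - σ) * (1 - σ) ^ (-α - 1) = (1 - σ) ^ (-α) := by
  have h : 0 < 1 - σ := by linarith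
  rw [Real.rpow_sub_one h.ne']
  field_simp

private lemma one_sub_rpow_mul_nonneg {a σ : ℝ} (ha : 0 ≤ a) (hσ : σ ∈ Ioc (0 : ℝ) 1) :
    0 ≤ (1 - σ ^ a) * (1 - σ) ^ (-α - 1) :=
  mul_nonneg (by linarith [Real.rpow_le_one hσ.1.le hσ.2 ha])
    (Real.rpow_nonneg (by linarith [hσ.2]) _)

lemma intervalIntegrable_marchaud_rpow (hα1 : α < 1) {a : ℝ} (ha : 0 ≤ a) :
    IntervalIntegrable (fun σ : ℝ => (1 - σ ^ a) * (1 - σ) ^ (-α - 1)) volume 0 1 := by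
  refine ((intervalIntegrable_one_sub_rpow (p := -α) (by linarith)).const_mul (max a 1)).mono_fun'
    (by fun_prop) ?_
  rw [uIoc_of_le zero_le_one]
  refine (ae_restrict_iff' measurableSet_Ioc).2 (ae_of_all _ fun σ hσ => ?_)
  beta_reduce
  rw [Real.norm_of_nonneg (one_sub_rpow_mul_nonneg ha hσ)]
  rcases hσ.2.eq_or_lt with rfl | h1
  · simp only [Real.one_rpow, sub_self, zero_mul]
    positivity
  · calc (1 - σ ^ a) * (1 - σ) ^ (-α - 1)
        ≤ max a 1 * (1 - σ) * (1 - σ) ^ (-α - 1) :=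
          mul_le_mul_of_nonneg_right (one_sub_rpow_le hσ.1 hσ.2)
            (Real.rpow_nonneg (by linarith) _)
      _ = max a 1 * (1 - σ) ^ (-α) := by rw [mul_assoc, one_sub_mul_rpow h1]

/-- The Marchaud form of the Caputo derivative of order `α` of a power, at the point `1`. -/
lemma integral_marchaud_rpow (hα1 : α < 1) {a : ℝ} (ha : 0 < a) :
    α * ∫ σ in (0 : ℝ)..1, (1 - σ ^ a) * (1 - σ) ^ (-α - 1) =
      Real.Gamma (1 + a) * Real.Gamma (1 - α) / Real.Gamma (1 + a - α) - 1 := by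
  have hI := (intervalIntegrable_marchaud_rpow hα1 ha.le).const_mul α
  have hB : IntervalIntegrable (fun σ : ℝ => a * (σ ^ (a - 1) * (1 - σ) ^ (-α))) volume 0 1 := by
    have := (intervalIntegrable_beta ha (b := 1 - α) (by linarith)).const_mul a
    simpa only [show 1 - α - 1 = -α by ring] using this
  have hBv : ∫ σ in (0 : ℝ)..1, a * (σ ^ (a - 1) * (1 - σ) ^ (-α)) =
      Real.Gamma (1 + a) * Real.Gamma (1 - α) / Real.Gamma (1 + a - α) := by
    have := integral_beta ha (b := 1 - α) (by linarith)
    rw [show 1 - α - 1 = -α by ring] at this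
    rw [intervalIntegral.integral_const_mul, this, add_comm 1 a, Real.Gamma_add_one ha.ne',
      show a + (1 - α) = a + 1 - α by ring]
    ring
  have hftc := intervalIntegral.integral_eq_sub_of_hasDerivAt_of_tendsto (a := 0) (b := 1)
    (f := fun σ : ℝ => (1 - σ ^ a) * (1 - σ) ^ (-α))
    (f' := fun σ : ℝ => α * ((1 - σ ^ a) * (1 - σ) ^ (-α - 1)) - a * (σ ^ (a - 1) * (1 - σ) ^ (-α)))
    (fa := 1) (fb := 0) zero_lt_one ?_ (hI.sub hB) ?_ ?_
  · rw [intervalIntegral.integral_sub hI hB, hBv, intervalIntegral.integral_const_mul] at hftc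
    linarith
  · intro σ hσ
    have h1 : HasDerivAt (fun σ : ℝ => 1 - σ ^ a) (-(a * σ ^ (a - 1))) σ :=
      (Real.hasDerivAt_rpow_const (Or.inl hσ.1.ne')).const_sub 1
    have h2 : HasDerivAt (fun σ : ℝ => (1 - σ) ^ (-α)) (-1 * -α * (1 - σ) ^ (-α - 1)) σ :=
      ((hasDerivAt_id σ).const_sub 1).rpow_const (Or.inl (by simp only [id]; linarith [hσ.2]))
    exact (h1.fun_mul h2).congr_deriv (by ring)
  · have h : ContinuousAt (fun σ : ℝ => (1 - σ ^ a) * (1 - σ) ^ (-α)) 0 := by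
      refine ContinuousAt.mul (continuousAt_const.sub
        (Real.continuousAt_rpow_const _ _ (Or.inr ha.le))) ?_
      exact (continuousAt_const.sub continuousAt_id).rpow_const (Or.inl (by simp))
    have h' := h.tendsto.mono_left (nhdsWithin_le_nhds (s := Ioi 0))
    simpa [Real.zero_rpow ha.ne'] using h'
  · have hlim : Tendsto (fun σ : ℝ => max a 1 * (1 - σ) ^ (1 - α)) (𝓝[<] 1) (𝓝 0) := by
      have h : ContinuousAt (fun σ : ℝ => max a 1 * (1 - σ) ^ (1 - α)) 1 :=
        continuousAt_const.mul ((continuousAt_const.sub continuousAt_id).rpow_const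
          (Or.inr (by linarith)))
      have h' := h.tendsto.mono_left (nhdsWithin_le_nhds (s := Iio 1))
      simpa [Real.zero_rpow (show 1 - α ≠ 0 by linarith)] using h'
    refine squeeze_zero' ?_ ?_ hlim
    all_goals
      filter_upwards [Ioo_mem_nhdsLT (zero_lt_one (α := ℝ))] with σ hσ
      have hs : 0 < 1 - σ := by linarith [hσ.2]
    · exact mul_nonneg (by linarith [Real.rpow_le_one hσ.1.le hσ.2.le ha.le])
        (Real.rpow_nonneg hs.le _)
    · rw [show 1 - α = 1 + -α by ring, Real.rpow_add hs, Real.rpow_one, ← mul_assoc]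
      exact mul_le_mul_of_nonneg_right (one_sub_rpow_le hσ.1 hσ.2.le) (Real.rpow_nonneg hs.le _)

/-- The equation `∂_t^α y = -y` for `y(t) = E_α(-t^α)`, with the Caputo derivative in Marchaud form
and rescaled to the unit interval. -/
lemma mittagLeffler_neg_eq (hα : 1 / 2 ≤ α) (hα1 : α < 1) {r : ℝ} (hr : 0 ≤ r) :
    Real.Gamma (1 - α) * r * mittagLeffler α (-r) = 1 - mittagLeffler α (-r) +
      α * ∫ σ in (0 : ℝ)..1, (mittagLeffler α (-(r * σ ^ α)) - mittagLeffler α (-r)) *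
        (1 - σ) ^ (-α - 1) := by
  have hα0 : 0 < α := by linarith
  set J : ℕ → ℝ := fun k => ∫ σ in (0 : ℝ)..1, (1 - σ ^ ((k : ℝ) * α)) * (1 - σ) ^ (-α - 1) with hJ
  have hJ0 : J 0 = 0 := by simp [hJ]
  have hJsucc : ∀ j : ℕ, α * (J (j + 1) / Real.Gamma (1 + (j + 1 : ℕ) * α)) =
      Real.Gamma (1 - α) / Real.Gamma (1 + j * α) - 1 / Real.Gamma (1 + (j + 1 : ℕ) * α) := by
    intro j
    have h := integral_marchaud_rpow (α := α) hα1 (a := ((j + 1 : ℕ) : ℝ) * α) (by positivity)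
    have h1 := Gamma_one_add_mul_pos hα j
    have h2 := Gamma_one_add_mul_pos hα (j + 1)
    rw [show 1 + ((j + 1 : ℕ) : ℝ) * α - α = 1 + j * α by push_cast; ring] at h
    rw [← mul_div_assoc]
    change α * J (j + 1) = _ at h
    rw [h]
    field_simp
  set f : ℕ → ℝ → ℝ := fun k σ => -((-r) ^ k / Real.Gamma (1 + k * α)) *
    ((1 - σ ^ ((k : ℝ) * α)) * (1 - σ) ^ (-α - 1)) with hf
  have hfint : ∀ k, Integrable (f k) (volume.restrict (Ioc 0 1)) := fun k =>
    (((intervalIntegrable_marchaud_rpow hα1 (a := (k : ℝ) * α) (by positivity)).const_mul _).1)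
  have hfI : ∀ k, ∫ σ in Ioc 0 1, f k σ = -((-r) ^ k / Real.Gamma (1 + k * α)) * J k := by
    intro k
    rw [← intervalIntegral.integral_of_le zero_le_one]
    exact intervalIntegral.integral_const_mul _ _
  have hfN : ∀ k, ∫ σ in Ioc 0 1, ‖f k σ‖ = r ^ k / Real.Gamma (1 + k * α) * J k := by
    intro k
    have hG := Gamma_one_add_mul_pos hα k
    rw [hJ]
    simp only
    rw [← intervalIntegral.integral_const_mul, intervalIntegral.integral_of_le zero_le_one]
    refine setIntegral_congr_fun measurableSet_Ioc fun σ hσ => ?_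
    simp only [hf, norm_mul, norm_neg, norm_div, norm_pow, Real.norm_of_nonneg hr,
      Real.norm_of_nonneg hG.le]
    rw [← norm_mul, Real.norm_of_nonneg (one_sub_rpow_mul_nonneg (by positivity) hσ)]
  have hsr := summable_mittagLeffler hα r
  have hsum : Summable fun k => ∫ σ in Ioc 0 1, ‖f k σ‖ := by
    simp_rw [hfN]
    rw [← summable_nat_add_iff 1]
    have h1 := (((hsr.mul_left (Real.Gamma (1 - α) * r)).sub
      ((summable_nat_add_iff 1).2 hsr))).mul_left α⁻¹
    refine h1.congr fun j => ?_
    have h2 := hJsucc j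
    rw [inv_mul_eq_iff_eq_mul₀ hα0.ne']
    calc _ = r ^ (j + 1) * (Real.Gamma (1 - α) / Real.Gamma (1 + j * α)
          - 1 / Real.Gamma (1 + (j + 1 : ℕ) * α)) := by ring
      _ = _ := by rw [← h2]; ring
  have hmain := hasSum_integral_of_summable_integral_norm hfint hsum
  simp_rw [hfI] at hmain
  have hpt : ∫ σ in Ioc 0 1, ∑' k, f k σ = ∫ σ in (0 : ℝ)..1,
      (mittagLeffler α (-(r * σ ^ α)) - mittagLeffler α (-r)) * (1 - σ) ^ (-α - 1) := by
    rw [intervalIntegral.integral_of_le zero_le_one]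
    refine setIntegral_congr_fun measurableSet_Ioc fun σ hσ => ?_
    simp only [hf]
    have hs1 := summable_mittagLeffler hα (-(r * σ ^ α))
    have hs2 := summable_mittagLeffler hα (-r)
    unfold mittagLeffler
    rw [← hs1.tsum_sub hs2, ← tsum_mul_right]
    congr 1
    funext k
    rw [mul_comm (k : ℝ) α, Real.rpow_mul hσ.1.le, Real.rpow_natCast, ← neg_mul, mul_pow]
    ring
  rw [hpt] at hmain
  have hval : HasSum (fun k : ℕ => α * (-((-r) ^ k / Real.Gamma (1 + k * α)) * J k))
      (Real.Gamma (1 - α) * r * mittagLeffler α (-r) + (mittagLeffler α (-r) - 1)) := by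
    rw [← hasSum_nat_add_iff' 1]
    have hE := (summable_mittagLeffler hα (-r)).hasSum
    have h1 := (hE.mul_left (Real.Gamma (1 - α) * r)).add ((hasSum_nat_add_iff' 1).2 hE)
    have hv : Real.Gamma (1 - α) * r * mittagLeffler α (-r) + (mittagLeffler α (-r) - 1) -
        ∑ i ∈ Finset.range 1, α * (-((-r) ^ i / Real.Gamma (1 + i * α)) * J i) =
        Real.Gamma (1 - α) * r * mittagLeffler α (-r) + (mittagLeffler α (-r) -
          ∑ i ∈ Finset.range 1, (-r) ^ i / Real.Gamma (1 + i * α)) := by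
      simp [hJ0]
    rw [hv]
    refine h1.congr_fun fun j => ?_
    calc _ = -(-r) ^ (j + 1) * (α * (J (j + 1) / Real.Gamma (1 + (j + 1 : ℕ) * α))) := by ring
      _ = _ := by rw [hJsucc j]; ring
  have := (hmain.mul_left α).unique hval
  linarith

end FractionalDerivative

section Decay

variable {α : ℝ}

/-- Pointwise comparison in the fractional equation: the engine of the maximum principle. -/
lemma abs_mittagLeffler_neg_le_of_le (hα : 1 / 2 ≤ α) (hα1 : α < 1) {r : ℝ} (hr : 0 ≤ r)
    {g : ℝ → ℝ} (hgi : IntervalIntegrable g volume 0 1) (hg0 : ∀ σ ∈ Ioc (0 : ℝ) 1, 0 ≤ g σ)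
    (hg : ∀ σ ∈ Ioc (0 : ℝ) 1,
      (|mittagLeffler α (-(r * σ ^ α))| - |mittagLeffler α (-r)|) * (1 - σ) ^ (-α - 1) ≤ g σ) :
    (Real.Gamma (1 - α) * r + 1) * |mittagLeffler α (-r)| ≤ 1 + α * ∫ σ in (0 : ℝ)..1, g σ := by
  have hα0 : 0 < α := by linarith
  obtain ⟨s, hs1, hs⟩ : ∃ s : ℝ, |s| = 1 ∧ s * mittagLeffler α (-r) = |mittagLeffler α (-r)| := by
    rcases abs_choice (mittagLeffler α (-r)) with h | h
    · exact ⟨1, by simp, by rw [h, one_mul]⟩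
    · exact ⟨-1, by simp, by rw [h]; ring⟩
  have heq := mittagLeffler_neg_eq hα hα1 hr
  have hle : s * ∫ σ in (0 : ℝ)..1, (mittagLeffler α (-(r * σ ^ α)) - mittagLeffler α (-r)) *
        (1 - σ) ^ (-α - 1) ≤ ∫ σ in (0 : ℝ)..1, g σ := by
    rw [← intervalIntegral.integral_const_mul, intervalIntegral.integral_of_le zero_le_one,
      intervalIntegral.integral_of_le zero_le_one]
    have hpt : ∀ σ ∈ Ioc (0 : ℝ) 1, s * ((mittagLeffler α (-(r * σ ^ α)) - mittagLeffler α (-r)) *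
        (1 - σ) ^ (-α - 1)) ≤ g σ := by
      intro σ hσ
      refine le_trans ?_ (hg σ hσ)
      rw [← mul_assoc, mul_sub, hs]
      refine mul_le_mul_of_nonneg_right ?_ (Real.rpow_nonneg (by linarith [hσ.2]) _)
      have : s * mittagLeffler α (-(r * σ ^ α)) ≤ |mittagLeffler α (-(r * σ ^ α))| := by
        refine (le_abs_self _).trans ?_
        rw [abs_mul, hs1, one_mul]
      linarith
    by_cases hint : IntegrableOn (fun σ => s * ((mittagLeffler α (-(r * σ ^ α)) -
        mittagLeffler α (-r)) * (1 - σ) ^ (-α - 1))) (Ioc 0 1) volume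
    · exact setIntegral_mono_on hint hgi.1 measurableSet_Ioc hpt
    · rw [integral_undef hint]
      exact setIntegral_nonneg measurableSet_Ioc hg0
  have hs2 : s ≤ 1 := hs1 ▸ le_abs_self s
  have h := mul_le_mul_of_nonneg_left hle hα0.le
  rw [← hs]
  have e := congrArg (s * ·) heq
  nlinarith

lemma abs_mittagLeffler_neg_le_one (hα : 1 / 2 ≤ α) (hα1 : α < 1) {r : ℝ} (hr : 0 ≤ r) :
    |mittagLeffler α (-r)| ≤ 1 := by
  have hcont : ContinuousOn (fun x => |mittagLeffler α (-x)|) (Icc 0 r) :=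
    ((continuous_mittagLeffler hα).comp continuous_neg).abs.continuousOn
  obtain ⟨m, hm, hmax⟩ := isCompact_Icc.exists_isMaxOn (nonempty_Icc.2 hr) hcont
  refine (hmax (right_mem_Icc.2 hr)).trans ?_
  have h := abs_mittagLeffler_neg_le_of_le hα hα1 hm.1 (g := fun _ => 0) (by simp) (by simp) ?_
  · have hΓ : 0 < Real.Gamma (1 - α) := Real.Gamma_pos_of_pos (by linarith)
    have h1 : 0 ≤ Real.Gamma (1 - α) * m * |mittagLeffler α (-m)| :=
      mul_nonneg (mul_nonneg hΓ.le hm.1) (abs_nonneg _)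
    simp only [intervalIntegral.integral_zero] at h
    beta_reduce
    linarith
  · intro σ hσ
    have hσ1 : σ ^ α ≤ 1 := Real.rpow_le_one hσ.1.le hσ.2 (by linarith)
    have hσ0 : 0 ≤ σ ^ α := Real.rpow_nonneg hσ.1.le _
    have h1 : |mittagLeffler α (-(m * σ ^ α))| ≤ |mittagLeffler α (-m)| :=
      hmax ⟨mul_nonneg hm.1 hσ0, (mul_le_of_le_one_right hm.1 hσ1).trans hm.2⟩
    exact mul_nonpos_of_nonpos_of_nonneg (by linarith) (Real.rpow_nonneg (by linarith [hσ.2]) _)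

lemma exists_abs_mittagLeffler_neg_mul_le (hα : 1 / 2 ≤ α) (hα1 : α < 1) :
    ∃ C : ℝ, 0 < C ∧ ∀ r : ℝ, 0 ≤ r → r * |mittagLeffler α (-r)| ≤ C := by
  have hα0 : 0 < α := by linarith
  have hΓ : 0 < Real.Gamma (1 - α) := Real.Gamma_pos_of_pos (by linarith)
  have hpi := intervalIntegrable_one_sub_rpow (p := -α) (by linarith)
  set P : ℝ := ∫ σ in (0 : ℝ)..1, (1 - σ) ^ (-α) with hP
  have hP0 : 0 ≤ P := intervalIntegral.integral_nonneg zero_le_one fun σ hσ =>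
    Real.rpow_nonneg (by linarith [hσ.2]) _
  refine ⟨(1 + α * (4 + 2 * P)) / Real.Gamma (1 - α), by positivity, fun r hr => ?_⟩
  have hcont : ContinuousOn (fun x => x * |mittagLeffler α (-x)|) (Icc 0 r) :=
    (continuous_id.mul ((continuous_mittagLeffler hα).comp continuous_neg).abs).continuousOn
  obtain ⟨m, hm, hmax⟩ := isCompact_Icc.exists_isMaxOn (nonempty_Icc.2 hr) hcont
  refine (hmax (right_mem_Icc.2 hr)).trans ?_
  beta_reduce
  rcases hm.1.eq_or_lt with rfl | hm0
  · rw [zero_mul]; positivity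
  have hF0 := abs_nonneg (mittagLeffler α (-m))
  have hF1 := abs_mittagLeffler_neg_le_one hα hα1 hm.1
  have h := abs_mittagLeffler_neg_le_of_le hα hα1 hm.1
    (g := fun σ => 4 + 2 * (1 - σ) ^ (-α)) (intervalIntegrable_const.add (hpi.const_mul 2))
    (fun σ hσ => add_nonneg (by norm_num)
      (mul_nonneg (by norm_num) (Real.rpow_nonneg (by linarith [hσ.2]) _))) ?_
  · rw [intervalIntegral.integral_add intervalIntegrable_const (hpi.const_mul 2),
      intervalIntegral.integral_const_mul] at h
    simp only [intervalIntegral.integral_const, sub_zero, one_smul] at h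
    rw [le_div_iff₀ hΓ]
    linarith
  · intro σ hσ
    set F := |mittagLeffler α (-m)|
    set G := |mittagLeffler α (-(m * σ ^ α))|
    have hσ0 : 0 < σ ^ α := Real.rpow_pos_of_pos hσ.1 _
    have hσ1 : σ ^ α ≤ 1 := Real.rpow_le_one hσ.1.le hσ.2 hα0.le
    have hG1 : G ≤ 1 := abs_mittagLeffler_neg_le_one hα hα1 (mul_nonneg hm.1 hσ0.le)
    have hGm : m * σ ^ α * G ≤ m * F :=
      hmax ⟨mul_nonneg hm.1 hσ0.le, (mul_le_of_le_one_right hm.1 hσ1).trans hm.2⟩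
    have hGm' : σ ^ α * G ≤ F := le_of_mul_le_mul_left (by linarith) hm0
    have hG0 : 0 ≤ G := abs_nonneg _
    rcases hσ.2.eq_or_lt with rfl | hlt
    · have : G = F := by simp [G, F]
      rw [this, sub_self, zero_mul]
      positivity
    have hs : 0 < 1 - σ := by linarith
    rcases le_or_gt σ (1 / 2) with hhalf | hhalf
    · have h1 : (1 - σ) ^ (-α - 1) ≤ 4 := by
        calc (1 - σ) ^ (-α - 1) ≤ (1 / 2 : ℝ) ^ (-α - 1) :=
              Real.rpow_le_rpow_of_nonpos (by norm_num) (by linarith) (by linarith)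
          _ ≤ (1 / 2 : ℝ) ^ (-2 : ℝ) :=
              Real.rpow_le_rpow_of_exponent_ge (by norm_num) (by norm_num) (by linarith)
          _ = 4 := by
              rw [show (-2 : ℝ) = ((-2 : ℤ) : ℝ) by norm_num, Real.rpow_intCast]; norm_num
      have h2 : 0 ≤ (1 - σ) ^ (-α - 1) := Real.rpow_nonneg hs.le _
      have h3 : 0 ≤ (1 - σ) ^ (-α) := Real.rpow_nonneg hs.le _
      have h4 : (G - F) * (1 - σ) ^ (-α - 1) ≤ 1 * (1 - σ) ^ (-α - 1) :=
        mul_le_mul_of_nonneg_right (by linarith) h2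
      linarith
    · have h1 : σ ≤ σ ^ α := by
        simpa using Real.rpow_le_rpow_of_exponent_ge hσ.1 hσ.2 hα1.le
      have h2 : G - F ≤ 2 * (1 - σ) := by
        have h3 : σ * G ≤ F := (mul_le_mul_of_nonneg_right h1 hG0).trans hGm'
        nlinarith
      have h4 : (G - F) * (1 - σ) ^ (-α - 1) ≤ 2 * (1 - σ) ^ (-α) := by
        rw [← one_sub_mul_rpow hlt, ← mul_assoc]
        exact mul_le_mul_of_nonneg_right h2 (Real.rpow_nonneg hs.le _)
      linarith

end Decay

section LowerBound

variable {α : ℝ}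

lemma integral_mittagLeffler_mul_cos_ge (hα : 1 / 2 ≤ α) (hα1 : α < 1) {C : ℝ}
    (hC : ∀ r : ℝ, 0 ≤ r → r * |mittagLeffler α (-r)| ≤ C) {r x : ℝ} (hr : 1 ≤ r) (hx : 1 ≤ x)
    (hxr : x ≤ 3 * r) :
    mittagLeffler α r / (9 * r) - mittagLeffler α ((1 - (1 / x) ^ 2) * r) - (1 + C) ≤
      ∫ ξ in Ioi (0 : ℝ), mittagLeffler α ((1 - ξ ^ 2) * r) * Real.cos (x * ξ) := by
  have hr0 : 0 < r := by linarith
  have hx0 : 0 < x := by linarith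
  have hC0 : 0 ≤ C := by simpa using hC 0 le_rfl
  set h : ℝ → ℝ := fun ξ => mittagLeffler α ((1 - ξ ^ 2) * r) * Real.cos (x * ξ) with hh
  have hcont : Continuous h :=
    ((continuous_mittagLeffler hα).comp (by fun_prop)).mul (by fun_prop)
  have hint : ∀ p q : ℝ, IntervalIntegrable h volume p q := fun p q =>
    hcont.intervalIntegrable p q
  have habs : ∀ ξ, ‖h ξ‖ ≤ |mittagLeffler α ((1 - ξ ^ 2) * r)| := by
    intro ξ
    rw [hh, norm_mul, Real.norm_eq_abs, Real.norm_eq_abs]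
    exact mul_le_of_le_one_right (abs_nonneg _) (Real.abs_cos_le_one _)
  have hnegarg : ∀ ξ : ℝ, (1 - ξ ^ 2) * r = -((ξ ^ 2 - 1) * r) := fun ξ => by ring
  have htail : ∀ ξ ∈ Ioi (2 : ℝ), ‖h ξ‖ ≤ 2 * C * ξ ^ (-2 : ℝ) := by
    intro ξ hξ
    have hξ2 : (2 : ℝ) < ξ := hξ
    refine (habs ξ).trans ?_
    have h1 : 0 ≤ (ξ ^ 2 - 1) * r := mul_nonneg (by nlinarith) hr0.le
    have h2 := hC _ h1
    rw [hnegarg, Real.rpow_neg (by linarith), Real.rpow_two, ← div_eq_mul_inv,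
      le_div_iff₀ (by positivity)]
    have h3 : ξ ^ 2 / 2 ≤ (ξ ^ 2 - 1) * r := by
      have h5 : ξ ^ 2 / 2 ≤ ξ ^ 2 - 1 := by nlinarith
      exact h5.trans (le_mul_of_one_le_right (by nlinarith) hr)
    have h4 := mul_le_mul_of_nonneg_right h3 (abs_nonneg (mittagLeffler α (-((ξ ^ 2 - 1) * r))))
    linarith
  have hdom : IntegrableOn (fun ξ : ℝ => 2 * C * ξ ^ (-2 : ℝ)) (Ioi 2) :=
    (integrableOn_Ioi_rpow_of_lt (by norm_num) (by norm_num)).const_mul _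
  have htailint : IntegrableOn h (Ioi 2) :=
    hdom.mono' hcont.aestronglyMeasurable ((ae_restrict_iff' measurableSet_Ioi).2 (ae_of_all _ htail))
  have htailbound : -C ≤ ∫ ξ in Ioi (2 : ℝ), h ξ := by
    have h1 := norm_integral_le_of_norm_le hdom
      ((ae_restrict_iff' measurableSet_Ioi).2 (ae_of_all _ htail))
    rw [integral_const_mul, integral_Ioi_rpow_of_lt (by norm_num) (by norm_num)] at h1
    have h2 : 2 * C * (-(2 : ℝ) ^ ((-2 : ℝ) + 1) / (-2 + 1)) = C := by
      rw [show (-2 : ℝ) + 1 = -1 by norm_num, Real.rpow_neg_one]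
      ring
    rw [h2] at h1
    exact (abs_le.1 h1).1
  set a := 1 / x with ha
  set ρ := 1 / (3 * r) with hρ
  have ha0 : 0 < a := by positivity
  have ha1 : a ≤ 1 := by rw [ha, div_le_one hx0]; exact hx
  have hρ0 : 0 < ρ := by positivity
  have hρa : ρ ≤ a := one_div_le_one_div_of_le hx0 hxr
  have hcos : ∀ ξ ∈ Icc 0 a, 1 / 2 ≤ Real.cos (x * ξ) := by
    intro ξ hξ
    have h1 : 0 ≤ x * ξ := mul_nonneg hx0.le hξ.1
    have h2 : x * ξ ≤ 1 := by
      calc x * ξ ≤ x * a := mul_le_mul_of_nonneg_left hξ.2 hx0.le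
        _ = 1 := by rw [ha]; field_simp
    have h3 : 1 - (x * ξ) ^ 2 / 2 ≤ Real.cos (x * ξ) := Real.one_sub_sq_div_two_le_cos
    nlinarith
  have hG0 := mittagLeffler_nonneg hα hr0.le
  have hcore : mittagLeffler α r / (9 * r) ≤ ∫ ξ in (0 : ℝ)..ρ, h ξ := by
    have h1 : ∫ _ξ in (0 : ℝ)..ρ, mittagLeffler α r / 3 = mittagLeffler α r / (9 * r) := by
      rw [intervalIntegral.integral_const, hρ, smul_eq_mul]
      field_simp
      ring
    rw [← h1]
    refine intervalIntegral.integral_mono_on hρ0.le intervalIntegrable_const (hint _ _)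
      fun ξ hξ => ?_
    have h2 : r * ξ ≤ 1 / 3 := by
      calc r * ξ ≤ r * ρ := mul_le_mul_of_nonneg_left hξ.2 hr0.le
        _ = 1 / 3 := by rw [hρ]; field_simp
    have h3 : 0 ≤ r * ξ := mul_nonneg hr0.le hξ.1
    have h4 : ξ ≤ 1 := hξ.2.trans (hρa.trans ha1)
    have h5 := mul_mittagLeffler_le hα hr (sq_nonneg ξ) (by nlinarith [hξ.1])
    have h6 : 2 / 3 * mittagLeffler α r ≤ mittagLeffler α ((1 - ξ ^ 2) * r) := by
      refine le_trans (mul_le_mul_of_nonneg_right ?_ hG0) h5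
      nlinarith
    have h7 := hcos ξ ⟨hξ.1, hξ.2.trans hρa⟩
    calc mittagLeffler α r / 3 = 2 / 3 * mittagLeffler α r * (1 / 2) := by ring
      _ ≤ mittagLeffler α ((1 - ξ ^ 2) * r) * Real.cos (x * ξ) :=
          mul_le_mul h6 h7 (by norm_num) (le_trans (by positivity) h6)
  have hmid : 0 ≤ ∫ ξ in ρ..a, h ξ := by
    refine intervalIntegral.integral_nonneg hρa fun ξ hξ => ?_
    have h1 := hcos ξ ⟨hρ0.le.trans hξ.1, hξ.2⟩
    have h2 : ξ ≤ 1 := hξ.2.trans ha1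
    have h3 : 0 ≤ (1 - ξ ^ 2) * r := mul_nonneg (by nlinarith [hξ.1]) hr0.le
    exact mul_nonneg (mittagLeffler_nonneg hα h3) (by linarith)
  have hosc : -mittagLeffler α ((1 - a ^ 2) * r) ≤ ∫ ξ in a..1, h ξ := by
    have hE0 : 0 ≤ mittagLeffler α ((1 - a ^ 2) * r) :=
      mittagLeffler_nonneg hα (mul_nonneg (by nlinarith) hr0.le)
    have h1 : ‖∫ ξ in a..1, h ξ‖ ≤ mittagLeffler α ((1 - a ^ 2) * r) * |1 - a| := by
      refine intervalIntegral.norm_integral_le_of_norm_le_const fun ξ hξ => ?_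
      rw [uIoc_of_le ha1] at hξ
      have h3 : 0 ≤ (1 - ξ ^ 2) * r := mul_nonneg (by nlinarith [hξ.1, hξ.2]) hr0.le
      refine (habs ξ).trans ?_
      rw [abs_of_nonneg (mittagLeffler_nonneg hα h3)]
      refine mittagLeffler_mono hα h3 (mul_le_mul_of_nonneg_right ?_ hr0.le)
      nlinarith [hξ.1]
    have h2 : mittagLeffler α ((1 - a ^ 2) * r) * |1 - a| ≤ mittagLeffler α ((1 - a ^ 2) * r) :=
      mul_le_of_le_one_right hE0 (by rw [abs_of_nonneg (by linarith)]; linarith)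
    exact (abs_le.1 (h1.trans h2)).1
  have hneg : -1 ≤ ∫ ξ in (1 : ℝ)..2, h ξ := by
    have h1 : ‖∫ ξ in (1 : ℝ)..2, h ξ‖ ≤ 1 * |(2 : ℝ) - 1| := by
      refine intervalIntegral.norm_integral_le_of_norm_le_const fun ξ hξ => ?_
      rw [uIoc_of_le one_le_two] at hξ
      refine (habs ξ).trans ?_
      rw [hnegarg]
      exact abs_mittagLeffler_neg_le_one hα hα1 (mul_nonneg (by nlinarith [hξ.1]) hr0.le)
    have h2 : (1 : ℝ) * |(2 : ℝ) - 1| = 1 := by norm_num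
    exact (abs_le.1 (h1.trans_eq h2)).1
  rw [← intervalIntegral.integral_interval_add_Ioi' (hint 0 2) htailint,
    ← intervalIntegral.integral_add_adjacent_intervals (hint 0 1) (hint 1 2),
    ← intervalIntegral.integral_add_adjacent_intervals (hint 0 a) (hint a 1),
    ← intervalIntegral.integral_add_adjacent_intervals (hint 0 ρ) (hint ρ a)]
  linarith

lemma tendsto_rpow_mul_exp_neg_mul_rpow {s b p : ℝ} (hb : 0 < b) (hp : 0 < p) :
    Tendsto (fun t : ℝ => t ^ s * Real.exp (-b * t ^ p)) atTop (𝓝 0) := by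
  refine ((tendsto_rpow_mul_exp_neg_mul_atTop_nhds_zero (s / p) b hb).comp
    (tendsto_rpow_atTop hp)).congr' ?_
  filter_upwards [eventually_gt_atTop 0] with t ht
  simp only [Function.comp]
  rw [← Real.rpow_mul ht.le, mul_div_cancel₀ _ hp.ne']

end LowerBound

theorem fundSol_lower_bound (α c β : ℝ) (hα : 1 / 2 ≤ α) (hα1 : α < 1)
    (hc : 0 < c) (hβ : 0 < β) (hβ' : β < 1 / 2) :
    ∀ ε > (0 : ℝ), ∃ T > (0 : ℝ), ∀ t : ℝ, T ≤ t →
      fundSol α (c * t ^ β) t ≥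
        (1 - ε) * c * α * t ^ (β - 2 * α) * mittagLeffler α (t ^ α) := by
  intro ε hε
  have hα0 : 0 < α := by linarith
  obtain ⟨C, hC0, hC⟩ := exists_abs_mittagLeffler_neg_mul_le hα hα1
  set Γ₂ := Real.Gamma (1 + (2 : ℕ) * α) with hΓ₂
  have hΓ₂0 : 0 < Γ₂ := Gamma_one_add_mul_pos hα 2
  have l1 : Tendsto (fun t : ℝ => t ^ (-(α - β))) atTop (𝓝 0) :=
    tendsto_rpow_neg_atTop (by linarith)
  have l2 := tendsto_rpow_mul_exp_neg_mul_rpow (s := α) (b := 1 / (24 * c ^ 2)) (p := 1 - 2 * β)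
    (by positivity) (by linarith)
  have l3 := tendsto_rpow_mul_exp_neg_mul_atTop_nhds_zero α (1 / 48) (by norm_num)
  have l4 : Tendsto (fun t : ℝ => t ^ (-α)) atTop (𝓝 0) := tendsto_rpow_neg_atTop hα0
  have hlim := (((l1.const_mul (π * c * α)).add l2).add l3).add (l4.const_mul ((1 + C) * Γ₂))
  simp only [mul_zero, add_zero] at hlim
  have hev : ∀ᶠ t : ℝ in atTop, fundSol α (c * t ^ β) t ≥
      (1 - ε) * c * α * t ^ (β - 2 * α) * mittagLeffler α (t ^ α) := by
    have e2 := (l1.const_mul c).eventually (ge_mem_nhds (show c * 0 < 3 by norm_num))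
    have e3 := (tendsto_rpow_atTop hβ).eventually_ge_atTop (1 / c)
    filter_upwards [hlim.eventually (ge_mem_nhds (show (0 : ℝ) < 1 / 9 by norm_num)), e2, e3,
      eventually_ge_atTop 24] with t hA h2 h3 h24
    have ht : 0 < t := by linarith
    set r := t ^ α with hr
    have hr0 : 0 < r := Real.rpow_pos_of_pos ht _
    have hr1 : 1 ≤ r := Real.one_le_rpow (by linarith) hα0.le
    have htβ : t ^ β = t ^ (-(α - β)) * r := by
      rw [hr, ← Real.rpow_add ht]; congr 1; ring
    set x := c * t ^ β with hxdef
    have hx1 : 1 ≤ x := by rwa [div_le_iff₀' hc] at h3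
    have hxr : x ≤ 3 * r := by
      rw [hxdef, htβ, ← mul_assoc]
      exact mul_le_mul_of_nonneg_right h2 hr0.le
    have hI := integral_mittagLeffler_mul_cos_ge hα hα1 hC hr1 hx1 hxr
    set G := mittagLeffler α r with hG
    have hG0 : 0 ≤ G := mittagLeffler_nonneg hα hr0.le
    set N := ⌊t / 12⌋₊ with hN
    have hN1 : (N : ℝ) ≤ t / 12 := Nat.floor_le (by positivity)
    have hN2 : t / 24 ≤ N := by
      have := Nat.lt_floor_add_one (t / 12)
      linarith
    have hNpos : 0 < N := by
      have : (0 : ℝ) < N := by linarith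
      exact_mod_cast this
    have hx0 : 0 < x := by linarith
    have hinv1 : (1 / x) ^ 2 ≤ 1 :=
      pow_le_one₀ (by positivity) ((div_le_one hx0).2 hx1)
    have hU := mittagLeffler_one_sub_mul_le hα hα1 (t := t) hNpos (by linarith)
      (sq_nonneg (1 / x)) hinv1
    rw [← hr, ← hG] at hU
    have hexp1 : Real.exp (-(N * (1 / x) ^ 2)) ≤
        Real.exp (-(1 / (24 * c ^ 2)) * t ^ (1 - 2 * β)) := by
      refine Real.exp_le_exp.2 ?_
      have e : 1 / (24 * c ^ 2) * t ^ (1 - 2 * β) = t / 24 * (1 / x) ^ 2 := by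
        rw [hxdef, Real.rpow_sub ht, Real.rpow_one, two_mul, Real.rpow_add ht]
        have : 0 < t ^ β := Real.rpow_pos_of_pos ht _
        field_simp
      rw [neg_mul, e]
      exact neg_le_neg (mul_le_mul_of_nonneg_right hN2 (sq_nonneg _))
    have hexp2 : Real.exp (-(N * α)) ≤ Real.exp (-(1 / 48) * t) := by
      refine Real.exp_le_exp.2 ?_
      nlinarith
    have hU' := hU.trans (mul_le_mul_of_nonneg_right (add_le_add hexp1 hexp2) hG0)
    have hK : 1 + C ≤ (1 + C) * Γ₂ * t ^ (-α) * (G / r) := by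
      have h1 : r ^ 2 / Γ₂ ≤ G := term_le_mittagLeffler hα hr0.le 2
      rw [div_le_iff₀ hΓ₂0] at h1
      have e : (1 + C) * Γ₂ * t ^ (-α) * (G / r) = (1 + C) * (G * Γ₂ / r ^ 2) := by
        rw [Real.rpow_neg ht.le, ← hr]; field_simp
      rw [e]
      exact le_mul_of_one_le_right (by linarith) ((one_le_div (by positivity)).2 h1)
    have hpow : t ^ (β - 2 * α) = t ^ (-(α - β)) / r := by
      rw [hr, ← Real.rpow_sub ht]; congr 1; ring
    set e1 := Real.exp (-(1 / (24 * c ^ 2)) * t ^ (1 - 2 * β))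
    set e2 := Real.exp (-(1 / 48) * t)
    have hGr : 0 ≤ G / r := div_nonneg hG0 hr0.le
    have hA' := mul_le_mul_of_nonneg_right hA hGr
    have hexpand : (r * e1 + r * e2) * (G / r) = (e1 + e2) * G := by field_simp
    have hsplit : 1 / 9 * (G / r) = G / (9 * r) := by field_simp
    have hfinal : π * (c * α * t ^ (β - 2 * α) * G) ≤
        ∫ ξ in Ioi (0 : ℝ), mittagLeffler α ((1 - ξ ^ 2) * r) * Real.cos (x * ξ) := by
      have : π * (c * α * t ^ (β - 2 * α) * G) = π * c * α * t ^ (-(α - β)) * (G / r) := by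
        rw [hpow]; ring
      rw [this]
      linarith
    have hu : c * α * t ^ (β - 2 * α) * G ≤ fundSol α x t := by
      unfold fundSol
      rw [one_div, ← div_eq_inv_mul, le_div_iff₀' Real.pi_pos]
      exact hfinal
    have hpos : 0 ≤ c * α * t ^ (β - 2 * α) * G := by positivity
    have : (1 - ε) * c * α * t ^ (β - 2 * α) * G ≤ c * α * t ^ (β - 2 * α) * G := by
      have := mul_nonneg hε.le hpos
      linarith
    exact this.trans hu
  obtain ⟨T, hT⟩ := eventually_atTop.1 hev
  exact ⟨max T 1, by positivity, fun t ht => hT t ((le_max_left _ _).trans ht)⟩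
end

section
/- For every real r ≥ 0, the Mittag-Leffler function of order 1/2 has the closed form E_{1/2}(r) = (1 + (2/√π) ∫_0^r e^{−s²} ds) · e^{r²}. -/
open Real

open Filter Topology

/-- Integration by parts for the even Gaussian moments over `[0, r]`. -/
lemma gaussian_moment_recursion (r : ℝ) (n : ℕ) :
    (2 * n + 1) * ∫ s in (0 : ℝ)..r, s ^ (2 * n) * exp (-s ^ 2) =
      r ^ (2 * n + 1) * exp (-r ^ 2) +
        2 * ∫ s in (0 : ℝ)..r, s ^ (2 * (n + 1)) * exp (-s ^ 2) := by
  have hderiv : ∀ s ∈ Set.uIcc 0 r, HasDerivAt (fun s : ℝ => s ^ (2 * n + 1) * exp (-s ^ 2))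
      ((2 * n + 1) * (s ^ (2 * n) * exp (-s ^ 2)) -
        2 * (s ^ (2 * (n + 1)) * exp (-s ^ 2))) s := by
    intro s _
    refine ((hasDerivAt_pow (2 * n + 1) s).fun_mul (hasDerivAt_pow 2 s).fun_neg.exp).congr_deriv ?_
    simp only [Nat.add_sub_cancel]
    push_cast
    ring
  have hint := intervalIntegral.integral_eq_sub_of_hasDerivAt hderiv
    (Continuous.intervalIntegrable (by fun_prop) _ _)
  rw [intervalIntegral.integral_sub (Continuous.intervalIntegrable (by fun_prop) _ _)
    (Continuous.intervalIntegrable (by fun_prop) _ _),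
    intervalIntegral.integral_const_mul, intervalIntegral.integral_const_mul] at hint
  simp only [ne_eq, Nat.add_eq_zero_iff, one_ne_zero, and_false, not_false_eq_true, zero_pow,
    zero_mul, sub_zero] at hint
  linarith

lemma abs_gaussian_moment_le {r : ℝ} (hr : 0 ≤ r) (n : ℕ) :
    |∫ s in (0 : ℝ)..r, s ^ (2 * n) * exp (-s ^ 2)| ≤ r ^ (2 * n) * r := by
  have h := intervalIntegral.norm_integral_le_of_norm_le_const (a := 0) (b := r)
    (f := fun s : ℝ => s ^ (2 * n) * exp (-s ^ 2)) (C := r ^ (2 * n)) (fun s hs => by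
      rw [Set.uIoc_of_le hr] at hs
      have hs0 : 0 ≤ s := hs.1.le
      rw [norm_of_nonneg (by positivity)]
      have hexp : exp (-s ^ 2) ≤ 1 := exp_le_one_iff.2 (by nlinarith)
      calc s ^ (2 * n) * exp (-s ^ 2) ≤ s ^ (2 * n) * 1 := by gcongr
        _ ≤ r ^ (2 * n) := by
          rw [mul_one]
          exact pow_le_pow_left₀ hs0 hs.2 _)
  simpa [abs_of_nonneg hr] using h

lemma factorial_mul_le_Gamma_nat_add_three_halves (n : ℕ) :
    n.factorial * (√π / 2) ≤ Gamma (n + 3 / 2) := by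
  induction n with
  | zero =>
    have h := Gamma_add_one (s := 1 / 2) (by norm_num)
    rw [Gamma_one_half_eq] at h
    norm_num at h ⊢
    linarith
  | succ n ih =>
    have h := Gamma_add_one (s := n + 3 / 2) (by positivity)
    have e : ((n + 1 : ℕ) : ℝ) + 3 / 2 = n + 3 / 2 + 1 := by push_cast; ring
    rw [e, h, Nat.factorial_succ]
    push_cast
    rw [mul_assoc]
    gcongr
    norm_num

/-- The odd part of the Mittag-Leffler series of order `1 / 2`. -/
lemma hasSum_pow_odd_div_Gamma {r : ℝ} (hr : 0 ≤ r) :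
    HasSum (fun n : ℕ => r ^ (2 * n + 1) / Gamma (n + 3 / 2))
      (2 / √π * (∫ s in (0 : ℝ)..r, exp (-s ^ 2)) * exp (r ^ 2)) := by
  set J : ℕ → ℝ := fun n => ∫ s in (0 : ℝ)..r, s ^ (2 * n) * exp (-s ^ 2) with hJ
  set a : ℕ → ℝ := fun n => 2 * exp (r ^ 2) * J n / Gamma (n + 1 / 2) with ha
  have hstep : ∀ n : ℕ, r ^ (2 * n + 1) / Gamma (n + 3 / 2) = a n - a (n + 1) := by
    intro n
    have hrec := gaussian_moment_recursion r n
    have hG := Gamma_add_one (s := n + 1 / 2) (by positivity)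
    have hpos : 0 < Gamma ((n : ℝ) + 1 / 2) := Gamma_pos_of_pos (by positivity)
    have e₁ : (n : ℝ) + 3 / 2 = n + 1 / 2 + 1 := by ring
    have e₂ : ((n + 1 : ℕ) : ℝ) + 1 / 2 = n + 1 / 2 + 1 := by push_cast; ring
    have hexp : exp (r ^ 2) * exp (-r ^ 2) = 1 := by rw [← exp_add]; simp
    simp only [ha]
    rw [e₁, e₂, hG]
    have hn : (n : ℝ) + 1 / 2 ≠ 0 := by positivity
    change (2 * n + 1) * J n = r ^ (2 * n + 1) * exp (-r ^ 2) + 2 * J (n + 1) at hrec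
    rw [div_sub_div _ _ hpos.ne' (by positivity), div_eq_div_iff (by positivity) (by positivity)]
    linear_combination (-(exp (r ^ 2)) * hrec - r ^ (2 * n + 1) * hexp) *
      (Gamma ((n : ℝ) + 1 / 2)) ^ 2 * (n + 1 / 2)
  have hlim : Tendsto (fun n => a (n + 1)) atTop (𝓝 0) := by
    have hpow := (FloorSemiring.tendsto_pow_div_factorial_atTop (r ^ 2)).const_mul
      (2 * exp (r ^ 2) * r ^ 3 / (√π / 2))
    rw [mul_zero] at hpow
    refine squeeze_zero_norm (fun n => ?_) hpow
    have hΓ := factorial_mul_le_Gamma_nat_add_three_halves n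
    have hb : |J (n + 1)| ≤ _ := abs_gaussian_moment_le hr (n + 1)
    have e : ((n + 1 : ℕ) : ℝ) + 1 / 2 = n + 3 / 2 := by push_cast; ring
    have hpos : 0 < Gamma ((n : ℝ) + 3 / 2) := Gamma_pos_of_pos (by positivity)
    simp only [ha]
    rw [e, norm_eq_abs, abs_div, abs_mul, abs_of_pos hpos, abs_of_pos (by positivity)]
    calc 2 * exp (r ^ 2) * |J (n + 1)| / Gamma (n + 3 / 2)
        ≤ 2 * exp (r ^ 2) * (r ^ (2 * (n + 1)) * r) / (n.factorial * (√π / 2)) := by gcongr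
      _ = _ := by field_simp; ring
  have hnonneg : ∀ n : ℕ, 0 ≤ r ^ (2 * n + 1) / Gamma (n + 3 / 2) := fun n =>
    div_nonneg (by positivity) (Gamma_pos_of_pos (by positivity)).le
  rw [hasSum_iff_tendsto_nat_of_nonneg hnonneg]
  simp only [hstep, Finset.sum_range_sub']
  have h0 : 2 / √π * (∫ s in (0 : ℝ)..r, exp (-s ^ 2)) * exp (r ^ 2) = a 0 - 0 := by
    simp only [ha, hJ, Nat.cast_zero, zero_add, Gamma_one_half_eq, mul_zero, pow_zero, one_mul]
    ring
  rw [h0]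
  exact ((tendsto_add_atTop_iff_nat 1).1 hlim).const_sub _

theorem mittagLeffler_half_closed_form (r : ℝ) (hr : 0 ≤ r) :
    mittagLeffler (1 / 2) r =
      (1 + (2 / Real.sqrt π) * ∫ s in (0 : ℝ)..r, Real.exp (-s ^ 2)) * Real.exp (r ^ 2) := by
  have heven : HasSum (fun n : ℕ => r ^ (2 * n) / Gamma (1 + (2 * n : ℕ) * (1 / 2)))
      (exp (r ^ 2)) := by
    have h := NormedSpace.expSeries_div_hasSum_exp (r ^ 2)
    rw [← exp_eq_exp_ℝ] at h
    refine HasSum.congr_fun h fun n => ?_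
    rw [pow_mul, ← Gamma_nat_eq_factorial]
    push_cast
    ring_nf
  have hodd : HasSum (fun n : ℕ => r ^ (2 * n + 1) / Gamma (1 + (2 * n + 1 : ℕ) * (1 / 2)))
      (2 / √π * (∫ s in (0 : ℝ)..r, exp (-s ^ 2)) * exp (r ^ 2)) := by
    convert hasSum_pow_odd_div_Gamma hr using 4 with n
    push_cast
    ring
  rw [mittagLeffler, (HasSum.even_add_odd (f := fun k : ℕ => r ^ k / Gamma (1 + k * (1 / 2)))
    heven hodd).tsum_eq]
  ring
end
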